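/- arXiv:1610.06731 — 3 statements merged into one kernel-verified Lean document; each statement's English description precedes it below -/
import Mathlib

section
/- Let F(ω) = (1/√θ) exp(−ω²/(2θ)) for θ > 0 and ω ∈ ℝ (the spectral density of a squared exponential covariance function). Then there exists ε > 0 such that for all θ > 0 and h > 0 with θh² < ε: (4/3) h √θ exp(−1/(8h²θ)) ≤ σ_h²(F) ≤ 7 h √θ exp(−1/(8h²θ)). -/
open MeasureTheory Real

/-- The optimal mean integrated interpolation error for a stationary Gaussian
process with spectral density `F` observed on the grid `hℤ`:
`σ_h²(F) = ∫ℝ F(ω) (∑_{k ≠ 0} F(ω + k/h)) / (∑_{k ∈ ℤ} F(ω + k/h)) dω`.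
(Division by zero is `0` in Lean, so the integrand is `0` where the denominator
vanishes, as in the convention of the paper.) -/
noncomputable def sigmaSq (h : ℝ) (F : ℝ → ℝ) : ℝ :=
  ∫ ω : ℝ, F ω * (∑' k : {k : ℤ // k ≠ 0}, F (ω + (k.1 : ℝ) / h)) /
    (∑' k : ℤ, F (ω + (k : ℝ) / h))

/-!
Split the error over the aliases `k ≠ 0`. Keeping only the terms `0` and `k` of the denominator
bounds the contribution of the alias `k` from above by `∫ ab / (a + b)` with `a = F ω` and
`b = F (ω + k/h)`; since `ab / (a + b)` increases with `b`, this integral for the single alias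
`k = 1` bounds the whole error from below. For the Gaussian density, recentring at the midpoint
turns the integral into `e^{-k²/(8h²θ)} / (2√θ)` times that of `e^{-t²/(2θ)} / cosh (kt/(2hθ))`.
Dropping the Gaussian factor leaves the total mass `π` of `1 / cosh` up to scaling, and
`cosh x ≤ e^{x²/2}` gives a Gaussian lower bound. As `θh² → 0` the aliases `|k| ≥ 2` are negligible
and the constants tend to `√(2π) > 4/3` and `2π < 7`.
-/

section ParallelSum

/-- The parallel sum `a b / (a + b)` of two nonnegative reals, half their harmonic mean; it is `0`
when `a = b = 0`. The integrand of `sigmaSq` is the parallel sum of the spectral density with the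
total mass of its aliases. -/
noncomputable def parallelSum (a b : ℝ) : ℝ := a * b / (a + b)

variable {a b c : ℝ}

lemma parallelSum_nonneg (ha : 0 ≤ a) (hb : 0 ≤ b) : 0 ≤ parallelSum a b := by
  unfold parallelSum; positivity

lemma parallelSum_le_left (ha : 0 ≤ a) (hb : 0 ≤ b) : parallelSum a b ≤ a :=
  div_le_of_le_mul₀ (by positivity) ha (by nlinarith)

lemma parallelSum_le_parallelSum_right (ha : 0 ≤ a) (hb : 0 ≤ b) (hbc : b ≤ c) :
    parallelSum a b ≤ parallelSum a c := by
  rcases ha.eq_or_lt with rfl | ha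
  · simp [parallelSum]
  · have hc : 0 ≤ c := hb.trans hbc
    unfold parallelSum
    rw [div_le_div_iff₀ (by positivity) (by positivity)]
    nlinarith [mul_le_mul_of_nonneg_left hbc (sq_nonneg a)]

lemma parallelSum_mul_mul (c a b : ℝ) :
    parallelSum (c * a) (c * b) = c * parallelSum a b := by
  unfold parallelSum
  rcases eq_or_ne c 0 with rfl | hc
  · simp
  rw [← mul_add, mul_mul_mul_comm, mul_assoc, mul_div_mul_left _ _ hc, mul_div_assoc]

lemma parallelSum_exp_add_exp_sub (u v : ℝ) :
    parallelSum (exp (u + v)) (exp (u - v)) = exp u * (cosh v)⁻¹ / 2 := by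
  unfold parallelSum
  rw [cosh_eq, exp_sub, exp_add, exp_neg]
  field_simp

lemma mul_div_tsum_le_parallelSum {ι : Type*} {f : ι → ℝ} (hf : ∀ k, 0 ≤ f k) {i j : ι}
    (hij : i ≠ j) : f i * f j / ∑' k, f k ≤ parallelSum (f i) (f j) := by
  classical
  by_cases hs : Summable f
  · have hle : f i + f j ≤ ∑' k, f k := by
      simpa only [Finset.sum_pair hij] using hs.sum_le_tsum {i, j} fun k _ ↦ hf k
    rcases (add_nonneg (hf i) (hf j)).eq_or_lt with h0 | hpos
    · have hi : f i = 0 := le_antisymm (by linarith [hf j]) (hf i)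
      simp [parallelSum, hi]
    · exact div_le_div_of_nonneg_left (mul_nonneg (hf i) (hf j)) hpos hle
  · simpa [tsum_eq_zero_of_not_summable hs] using parallelSum_nonneg (hf i) (hf j)

lemma integrable_parallelSum {α : Type*} [MeasurableSpace α] {μ : Measure α} {f g : α → ℝ}
    (hf : Integrable f μ) (hf₀ : ∀ x, 0 ≤ f x) (hg : AEMeasurable g μ) (hg₀ : ∀ x, 0 ≤ g x) :
    Integrable (fun x ↦ parallelSum (f x) (g x)) μ := by
  refine hf.mono' ?_ (.of_forall fun x ↦ ?_)
  · exact ((hf.aemeasurable.mul hg).div (hf.aemeasurable.add hg)).aestronglyMeasurable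
  · rw [norm_of_nonneg (parallelSum_nonneg (hf₀ x) (hg₀ x))]
    exact parallelSum_le_left (hf₀ x) (hg₀ x)

end ParallelSum

section SigmaSq

variable {h : ℝ} {F : ℝ → ℝ}

lemma sigmaSq_eq_integral_parallelSum (hsum : ∀ᵐ ω, Summable fun k : ℤ ↦ F (ω + k / h)) :
    sigmaSq h F = ∫ ω, parallelSum (F ω) (∑' k : {k : ℤ // k ≠ 0}, F (ω + (k.1 : ℝ) / h)) := by
  refine integral_congr_ae ?_
  filter_upwards [hsum] with ω hω
  have hsplit := hω.tsum_subtype_add_tsum_subtype_compl {0}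
  rw [tsum_singleton (0 : ℤ) fun k : ℤ ↦ F (ω + k / h), Int.cast_zero, zero_div, add_zero] at hsplit
  simp only [← hsplit]
  rfl

lemma integral_parallelSum_le_sigmaSq (hF : Integrable F) (hF₀ : ∀ ω, 0 ≤ F ω)
    (hsum : ∀ᵐ ω, Summable fun k : ℤ ↦ F (ω + k / h)) {k : ℤ} (hk : k ≠ 0) :
    ∫ ω, parallelSum (F ω) (F (ω + k / h)) ≤ sigmaSq h F := by
  have hshift (x : ℝ) : AEMeasurable fun ω ↦ F (ω + x) := (hF.comp_add_right x).aemeasurable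
  rw [sigmaSq_eq_integral_parallelSum hsum]
  refine integral_mono_ae (integrable_parallelSum hF hF₀ (hshift _) fun ω ↦ hF₀ _)
    (integrable_parallelSum hF hF₀ (.tsum fun _ ↦ hshift _) fun ω ↦ tsum_nonneg fun _ ↦ hF₀ _) ?_
  filter_upwards [hsum] with ω hω
  exact parallelSum_le_parallelSum_right (hF₀ _) (hF₀ _) <|
    (hω.subtype {k | k ≠ 0}).le_tsum ⟨k, hk⟩ fun _ _ ↦ hF₀ _

lemma sigmaSq_le_tsum_integral_parallelSum (hF : Integrable F) (hF₀ : ∀ ω, 0 ≤ F ω)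
    (hsum : Summable fun k : {k : ℤ // k ≠ 0} ↦ ∫ ω, parallelSum (F ω) (F (ω + (k.1 : ℝ) / h))) :
    sigmaSq h F ≤ ∑' k : {k : ℤ // k ≠ 0}, ∫ ω, parallelSum (F ω) (F (ω + (k.1 : ℝ) / h)) := by
  let aliasTerm (k : {k : ℤ // k ≠ 0}) (ω : ℝ) : ℝ :=
    F ω * F (ω + (k.1 : ℝ) / h) / ∑' j : ℤ, F (ω + (j : ℝ) / h)
  have hshift (x : ℝ) : AEMeasurable fun ω ↦ F (ω + x) := (hF.comp_add_right x).aemeasurable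
  have aliasTerm_nonneg k ω : 0 ≤ aliasTerm k ω :=
    div_nonneg (mul_nonneg (hF₀ _) (hF₀ _)) (tsum_nonneg fun _ ↦ hF₀ _)
  have aliasTerm_le k ω : aliasTerm k ω ≤ parallelSum (F ω) (F (ω + (k.1 : ℝ) / h)) := by
    simpa using mul_div_tsum_le_parallelSum (f := fun j : ℤ ↦ F (ω + j / h)) (fun _ ↦ hF₀ _)
      k.2.symm
  have pair_integrable (k : {k : ℤ // k ≠ 0}) :
      Integrable fun ω ↦ parallelSum (F ω) (F (ω + (k.1 : ℝ) / h)) :=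
    integrable_parallelSum hF hF₀ (hshift _) fun _ ↦ hF₀ _
  have aliasTerm_integrable k : Integrable (aliasTerm k) := by
    refine (pair_integrable k).mono' ?_ (.of_forall fun ω ↦ ?_)
    · exact ((hF.aemeasurable.mul (hshift _)).div (.tsum fun _ ↦ hshift _)).aestronglyMeasurable
    · rw [norm_of_nonneg (aliasTerm_nonneg k ω)]
      exact aliasTerm_le k ω
  have integral_aliasTerm_le k :=
    integral_mono (aliasTerm_integrable k) (pair_integrable k) (aliasTerm_le k)
  have aliasTerm_summable : Summable fun k ↦ ∫ ω, aliasTerm k ω :=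
    hsum.of_nonneg_of_le (fun k ↦ integral_nonneg (aliasTerm_nonneg k)) integral_aliasTerm_le
  calc sigmaSq h F = ∫ ω, ∑' k, aliasTerm k ω := by
        simp only [sigmaSq, aliasTerm, tsum_div_const, tsum_mul_left]
    _ = ∑' k, ∫ ω, aliasTerm k ω :=
        (integral_tsum_of_summable_integral_norm aliasTerm_integrable <| by
          simpa only [norm_of_nonneg (aliasTerm_nonneg _ _)] using aliasTerm_summable).symm
    _ ≤ _ := aliasTerm_summable.tsum_le_tsum integral_aliasTerm_le hsum

end SigmaSq

section HyperbolicSecant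

-- The substitution `x = sinh u` turns `du / cosh u` into `dx / (1 + x²)`.
lemma abs_cosh_smul_inv_one_add_sinh_sq (u : ℝ) :
    |cosh u| • (1 + sinh u ^ 2)⁻¹ = (cosh u)⁻¹ := by
  have hu := cosh_pos u
  rw [abs_of_pos hu, smul_eq_mul, add_comm, ← cosh_sq]
  field_simp

lemma integrable_inv_cosh : Integrable fun u : ℝ ↦ (cosh u)⁻¹ := by
  have hcov := integrableOn_image_iff_integrableOn_abs_deriv_smul MeasurableSet.univ
    (fun u _ ↦ (hasDerivAt_sinh u).hasDerivWithinAt) sinh_injective.injOn fun x ↦ (1 + x ^ 2)⁻¹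
  simp only [abs_cosh_smul_inv_one_add_sinh_sq, Set.image_univ, sinh_surjective.range_eq,
    integrableOn_univ] at hcov
  exact hcov.1 integrable_inv_one_add_sq

lemma integral_inv_cosh : ∫ u : ℝ, (cosh u)⁻¹ = π := by
  have hcov := integral_image_eq_integral_abs_deriv_smul MeasurableSet.univ
    (fun u _ ↦ (hasDerivAt_sinh u).hasDerivWithinAt) sinh_injective.injOn fun x ↦ (1 + x ^ 2)⁻¹
  simp only [abs_cosh_smul_inv_one_add_sinh_sq, Set.image_univ, sinh_surjective.range_eq,
    setIntegral_univ] at hcov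
  rw [← hcov, integral_univ_inv_one_add_sq]

variable {a b : ℝ}

lemma integral_exp_neg_mul_sq_mul_inv_cosh_le (hb : 0 ≤ b) (ha : a ≠ 0) :
    ∫ t, exp (-b * t ^ 2) * (cosh (a * t))⁻¹ ≤ π / |a| := by
  calc ∫ t, exp (-b * t ^ 2) * (cosh (a * t))⁻¹ ≤ ∫ t, (cosh (a * t))⁻¹ := by
        refine integral_mono_of_nonneg (.of_forall fun t ↦ ?_)
          (integrable_inv_cosh.comp_mul_left' ha) (.of_forall fun t ↦ ?_)
        · exact mul_nonneg (exp_pos _).le (inv_nonneg.2 (cosh_pos _).le)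
        · refine mul_le_of_le_one_left (inv_nonneg.2 (cosh_pos _).le) (exp_le_one_iff.2 ?_)
          nlinarith [sq_nonneg t]
    _ = π / |a| := by
        rw [Measure.integral_comp_mul_left fun u ↦ (cosh u)⁻¹, integral_inv_cosh, abs_inv,
          smul_eq_mul, inv_mul_eq_div]

lemma sqrt_pi_div_le_integral_exp_neg_mul_sq_mul_inv_cosh (hb : 0 < b) :
    √(π / (b + a ^ 2 / 2)) ≤ ∫ t, exp (-b * t ^ 2) * (cosh (a * t))⁻¹ := by
  have hcosh t : (cosh (a * t))⁻¹ ≤ 1 := inv_le_one_of_one_le₀ (one_le_cosh _)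
  have hint : Integrable fun t ↦ exp (-b * t ^ 2) * (cosh (a * t))⁻¹ := by
    refine (integrable_exp_neg_mul_sq hb).mono' ?_ (.of_forall fun t ↦ ?_)
    · exact Measurable.aestronglyMeasurable (by fun_prop)
    · rw [norm_of_nonneg (mul_nonneg (exp_pos _).le (inv_nonneg.2 (cosh_pos _).le))]
      exact mul_le_of_le_one_right (exp_pos _).le (hcosh t)
  rw [← integral_gaussian]
  refine integral_mono (integrable_exp_neg_mul_sq (by positivity)) hint fun t ↦ ?_
  calc exp (-(b + a ^ 2 / 2) * t ^ 2) = exp (-b * t ^ 2) * (exp ((a * t) ^ 2 / 2))⁻¹ := by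
        rw [← exp_neg, ← exp_add]
        ring_nf
    _ ≤ exp (-b * t ^ 2) * (cosh (a * t))⁻¹ := by
        gcongr
        exact cosh_le_exp_half_sq _

end HyperbolicSecant

section IntSeries

lemma summable_int_exp_neg_mul_sq {b s : ℝ} (hb : 0 < b) (hs : s ≠ 0) (x : ℝ) :
    Summable fun k : ℤ ↦ exp (-b * (x + k * s) ^ 2) := by
  have hθ := (summable_jacobiTheta₂_term_iff ⟨0, b * x * s / π⟩ ⟨0, b * s ^ 2 / π⟩).2
    (by simp only; positivity)
  refine (hθ.norm.mul_left (exp (-b * x ^ 2))).congr fun k ↦ ?_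
  rw [norm_jacobiTheta₂_term, ← exp_add]
  congr 1
  field_simp
  ring

lemma hasSum_int_pow_natAbs {q : ℝ} (hq : |q| < 1) :
    HasSum (fun k : ℤ ↦ q ^ k.natAbs) ((1 - q)⁻¹ + q * (1 - q)⁻¹) := by
  have hgeom := hasSum_geometric_of_abs_lt_one hq
  refine .of_nat_of_neg_add_one (by simpa using hgeom) ((hgeom.mul_left q).congr_fun fun n ↦ ?_)
  rw [show (-((n : ℤ) + 1)).natAbs = n + 1 by omega, pow_succ']

lemma hasSum_int_ne_zero_pow_natAbs {q : ℝ} (hq : |q| < 1) :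
    HasSum (fun k : {k : ℤ // k ≠ 0} ↦ q ^ k.1.natAbs) (2 * q / (1 - q)) := by
  have hzero : HasSum ((fun k : ℤ ↦ q ^ k.natAbs) ∘ Subtype.val : ({0} : Set ℤ) → ℝ) 1 := by
    simpa using hasSum_unique ((fun k : ℤ ↦ q ^ k.natAbs) ∘ Subtype.val : ({0} : Set ℤ) → ℝ)
  refine hzero.hasSum_compl_iff.2 ?_
  convert! hasSum_int_pow_natAbs hq using 1
  have hq_ne : 1 - q ≠ 0 := (sub_pos.2 (abs_lt.1 hq).2).ne'
  field_simp
  ring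

end IntSeries

section SquaredExponential

/-- The spectral density `θ^{-1/2} exp (-ω² / (2θ))` of a squared exponential covariance
function. -/
noncomputable def sqExpDensity (θ ω : ℝ) : ℝ := 1 / √θ * exp (-ω ^ 2 / (2 * θ))

variable {θ h c : ℝ}

lemma sqExpDensity_nonneg (θ ω : ℝ) : 0 ≤ sqExpDensity θ ω := by
  unfold sqExpDensity; positivity

lemma integrable_sqExpDensity (hθ : 0 < θ) : Integrable (sqExpDensity θ) := by
  refine ((integrable_exp_neg_mul_sq (b := 1 / (2 * θ)) (by positivity)).const_mul (1 / √θ)).congr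
    (.of_forall fun ω ↦ ?_)
  simp only [sqExpDensity]
  ring_nf

lemma summable_sqExpDensity (hθ : 0 < θ) (hh : h ≠ 0) (ω : ℝ) :
    Summable fun k : ℤ ↦ sqExpDensity θ (ω + k / h) := by
  refine ((summable_int_exp_neg_mul_sq (b := 1 / (2 * θ)) (by positivity) (inv_ne_zero hh)
    ω).mul_left (1 / √θ)).congr fun k ↦ ?_
  simp only [sqExpDensity]
  ring_nf

-- Completing the square about the midpoint of `ω` and `ω + c`.
lemma parallelSum_sqExpDensity (hθ : 0 < θ) (t : ℝ) :
    parallelSum (sqExpDensity θ (t - c / 2)) (sqExpDensity θ (t - c / 2 + c)) =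
      exp (-c ^ 2 / (8 * θ)) / (2 * √θ) *
        (exp (-(1 / (2 * θ)) * t ^ 2) * (cosh (c / (2 * θ) * t))⁻¹) := by
  have hleft : -(t - c / 2) ^ 2 / (2 * θ) =
      (-c ^ 2 / (8 * θ) + -(1 / (2 * θ)) * t ^ 2) + c / (2 * θ) * t := by
    field_simp
    ring
  have hright : -(t - c / 2 + c) ^ 2 / (2 * θ) =
      (-c ^ 2 / (8 * θ) + -(1 / (2 * θ)) * t ^ 2) - c / (2 * θ) * t := by
    field_simp
    ring
  unfold sqExpDensity
  rw [parallelSum_mul_mul, hleft, hright, parallelSum_exp_add_exp_sub, exp_add]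
  ring

lemma integral_parallelSum_sqExpDensity (hθ : 0 < θ) (c : ℝ) :
    ∫ ω, parallelSum (sqExpDensity θ ω) (sqExpDensity θ (ω + c)) =
      exp (-c ^ 2 / (8 * θ)) / (2 * √θ) *
        ∫ t, exp (-(1 / (2 * θ)) * t ^ 2) * (cosh (c / (2 * θ) * t))⁻¹ := by
  rw [← integral_const_mul, ← integral_sub_right_eq_self _ (c / 2)]
  simp only [parallelSum_sqExpDensity hθ]

lemma integral_parallelSum_sqExpDensity_le (hθ : 0 < θ) (hc : c ≠ 0) :
    ∫ ω, parallelSum (sqExpDensity θ ω) (sqExpDensity θ (ω + c)) ≤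
      π * √θ / |c| * exp (-c ^ 2 / (8 * θ)) := by
  rw [integral_parallelSum_sqExpDensity hθ]
  calc _ ≤ exp (-c ^ 2 / (8 * θ)) / (2 * √θ) * (π / |c / (2 * θ)|) := by
        gcongr
        exact integral_exp_neg_mul_sq_mul_inv_cosh_le (by positivity) (by positivity)
    _ = π * √θ / |c| * exp (-c ^ 2 / (8 * θ)) := by
        rw [abs_div, abs_of_pos (by positivity : 0 < 2 * θ)]
        field_simp
        exact (sq_sqrt hθ.le).symm

lemma le_integral_parallelSum_sqExpDensity (hθ : 0 < θ) (c : ℝ) :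
    √(2 * π * θ / (4 * θ + c ^ 2)) * exp (-c ^ 2 / (8 * θ)) ≤
      ∫ ω, parallelSum (sqExpDensity θ ω) (sqExpDensity θ (ω + c)) := by
  rw [integral_parallelSum_sqExpDensity hθ]
  calc √(2 * π * θ / (4 * θ + c ^ 2)) * exp (-c ^ 2 / (8 * θ))
      = exp (-c ^ 2 / (8 * θ)) / (2 * √θ) * √(π / (1 / (2 * θ) + (c / (2 * θ)) ^ 2 / 2)) := by
        have hradicand : π / (1 / (2 * θ) + (c / (2 * θ)) ^ 2 / 2) =
            2 * π * θ / (4 * θ + c ^ 2) * (4 * θ) := by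
          field_simp
          ring
        rw [hradicand, sqrt_mul (by positivity), sqrt_mul zero_le_four,
          show √(4 : ℝ) = 2 by rw [sqrt_eq_iff_mul_self_eq] <;> norm_num]
        field_simp
    _ ≤ _ := by
        gcongr
        exact sqrt_pi_div_le_integral_exp_neg_mul_sq_mul_inv_cosh (by positivity)

theorem le_sigmaSq_sqExpDensity (hθ : 0 < θ) (hh : 0 < h) :
    √(2 * π / (1 + 4 * (θ * h ^ 2))) * (h * √θ * exp (-(1 / (8 * h ^ 2 * θ)))) ≤
      sigmaSq h (sqExpDensity θ) := by
  have hsum : ∀ᵐ ω, Summable fun k : ℤ ↦ sqExpDensity θ (ω + k / h) :=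
    .of_forall (summable_sqExpDensity hθ hh.ne')
  calc √(2 * π / (1 + 4 * (θ * h ^ 2))) * (h * √θ * exp (-(1 / (8 * h ^ 2 * θ))))
      = √(2 * π * θ / (4 * θ + (1 / h) ^ 2)) * exp (-(1 / h) ^ 2 / (8 * θ)) := by
        have hradicand : 2 * π * θ / (4 * θ + (1 / h) ^ 2) =
            2 * π / (1 + 4 * (θ * h ^ 2)) * (h ^ 2 * θ) := by
          field_simp
          ring
        rw [hradicand, sqrt_mul (by positivity), sqrt_mul (by positivity), sqrt_sq hh.le,
          show -(1 / h) ^ 2 / (8 * θ) = -(1 / (8 * h ^ 2 * θ)) by field_simp]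
        ring
    _ ≤ _ := le_integral_parallelSum_sqExpDensity hθ _
    _ ≤ sigmaSq h (sqExpDensity θ) := by
        simpa using integral_parallelSum_le_sigmaSq (integrable_sqExpDensity hθ)
          (sqExpDensity_nonneg θ) hsum one_ne_zero

lemma integral_parallelSum_sqExpDensity_int_div_le (hθ : 0 < θ) (hh : 0 < h) {k : ℤ} (hk : k ≠ 0) :
    ∫ ω, parallelSum (sqExpDensity θ ω) (sqExpDensity θ (ω + k / h)) ≤
      π * h * √θ * exp (-(1 / (8 * h ^ 2 * θ))) ^ k.natAbs := by
  have hk_abs : (1 : ℝ) ≤ |(k : ℝ)| := by exact_mod_cast Int.one_le_abs hk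
  have hk_sq : (k.natAbs : ℝ) ≤ (k : ℝ) ^ 2 := by
    rw [← Int.cast_natCast]
    exact_mod_cast Int.natAbs_le_self_sq k
  have hk_cast : (k : ℝ) ≠ 0 := mod_cast hk
  refine (integral_parallelSum_sqExpDensity_le hθ (by positivity)).trans ?_
  gcongr ?_ * ?_
  · rw [abs_div, abs_of_pos hh, div_div_eq_mul_div, mul_right_comm]
    exact div_le_self (by positivity) hk_abs
  · rw [← exp_nat_mul, exp_le_exp]
    calc -((k : ℝ) / h) ^ 2 / (8 * θ) = -((k : ℝ) ^ 2 * (1 / (8 * h ^ 2 * θ))) := by field_simp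
      _ ≤ -(k.natAbs * (1 / (8 * h ^ 2 * θ))) := by gcongr
      _ = k.natAbs * -(1 / (8 * h ^ 2 * θ)) := by ring

theorem sigmaSq_sqExpDensity_le (hθ : 0 < θ) (hh : 0 < h) :
    sigmaSq h (sqExpDensity θ) ≤
      2 * π / (1 - exp (-(1 / (8 * h ^ 2 * θ)))) * (h * √θ * exp (-(1 / (8 * h ^ 2 * θ)))) := by
  have hq : |exp (-(1 / (8 * h ^ 2 * θ)))| < 1 := by
    rw [abs_exp, exp_lt_one_iff, neg_lt_zero]
    positivity
  have hmajorant := (hasSum_int_ne_zero_pow_natAbs hq).mul_left (π * h * √θ)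
  have hle (k : {k : ℤ // k ≠ 0}) := integral_parallelSum_sqExpDensity_int_div_le hθ hh k.2
  have hsummable := hmajorant.summable.of_nonneg_of_le
    (fun k ↦ integral_nonneg fun ω ↦
      parallelSum_nonneg (sqExpDensity_nonneg _ _) (sqExpDensity_nonneg _ _)) hle
  calc sigmaSq h (sqExpDensity θ) ≤ _ :=
        sigmaSq_le_tsum_integral_parallelSum (integrable_sqExpDensity hθ) (sqExpDensity_nonneg θ)
          hsummable
    _ ≤ _ := hasSum_le hle hsummable.hasSum hmajorant
    _ = _ := by ring

end SquaredExponential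

/-- Corollary 2: for the squared exponential spectral density
`F(ω) = θ^{−1/2} e^{−ω²/(2θ)}` the interpolation error satisfies
`(4/3) h√θ e^{−1/(8h²θ)} ≤ σ_h²(F) ≤ 7 h√θ e^{−1/(8h²θ)}` as `θh² → 0`:
there is an `ε > 0` such that the bounds hold whenever `θh² < ε`. -/
theorem squared_exponential_error_bounds :
    ∃ ε > (0 : ℝ), ∀ θ h : ℝ, 0 < θ → 0 < h → θ * h ^ 2 < ε →
      (4 / 3) * h * Real.sqrt θ * Real.exp (-(1 / (8 * h ^ 2 * θ)))
          ≤ sigmaSq h (fun ω => (1 / Real.sqrt θ) * Real.exp (-ω ^ 2 / (2 * θ))) ∧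
      sigmaSq h (fun ω => (1 / Real.sqrt θ) * Real.exp (-ω ^ 2 / (2 * θ)))
          ≤ 7 * h * Real.sqrt θ * Real.exp (-(1 / (8 * h ^ 2 * θ))) := by
  refine ⟨1 / 100, by norm_num, fun θ h hθ hh hsmall ↦ ?_⟩
  have hlower_const : 4 / 3 ≤ √(2 * π / (1 + 4 * (θ * h ^ 2))) := by
    apply le_sqrt_of_sq_le
    rw [le_div_iff₀ (by positivity)]
    linarith [pi_gt_three]
  have hq : exp (-(1 / (8 * h ^ 2 * θ))) ≤ 1 / 13 := by
    have hexponent : 12 ≤ 1 / (8 * h ^ 2 * θ) := by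
      rw [le_div_iff₀ (by positivity)]
      linarith
    rw [exp_neg, one_div (13 : ℝ)]
    exact inv_anti₀ (by norm_num) (by linarith [add_one_le_exp (1 / (8 * h ^ 2 * θ))])
  have hupper_const : 2 * π / (1 - exp (-(1 / (8 * h ^ 2 * θ)))) ≤ 7 := by
    rw [div_le_iff₀ (by linarith)]
    linarith [pi_lt_d2]
  simp only [mul_assoc _ h, mul_assoc _ (h * _)]
  constructor
  · exact (mul_le_mul_of_nonneg_right hlower_const (by positivity)).trans
      (le_sigmaSq_sqExpDensity hθ hh)
  · exact (sigmaSq_sqExpDensity_le hθ hh).trans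
      (mul_le_mul_of_nonneg_right hupper_const (by positivity))
end

section
/- Let d ≥ 1, let H = diag(h_1,…,h_d) with all h_i > 0, let F : ℝ^d → [0,∞) be measurable and integrable, and let K̂ : ℝ^d → ℝ be measurable and such that for almost every ω ∈ ℝ^d the series ∑_{k ∈ ℤ^d} K̂(ω + H^{-1}k) converges absolutely and the function (ω, x) ↦ F(ω) |1 − ∑_{k ∈ ℤ^d} K̂(ω + H^{-1}k) e^{2πi (H^{-1}k)·x}|² is integrable on ℝ^d × Ω_H, where Ω_H = [0,h_1] × … × [0,h_d]. Then (1/(h_1⋯h_d)) ∫_{Ω_H} ∫_{ℝ^d} F(ω) |1 − ∑_{k ∈ ℤ^d} K̂(ω + H^{-1}k) e^{2πi (H^{-1}k)·x}|² dω dx = ∫_{ℝ^d} F(ω) [ (1 − K̂(ω))² + ∑_{k ∈ ℤ^d, k ≠ 0} K̂(ω + H^{-1}k)² ] dω. -/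
open MeasureTheory Real

/-!
For fixed `ω` the function `x ↦ 1 − ∑_k K̂(ω + H⁻¹k) e^{2πi(H⁻¹k)·x}` is an absolutely convergent
series in the characters `e^{2πi(H⁻¹k)·x}` with coefficients `δ_{k0} − K̂(ω + H⁻¹k)`. The characters
are orthogonal on `Ω_H`, each of squared norm `h₁⋯h_d`, so Parseval evaluates the inner integral for
almost every `ω`, and Fubini moves this integral inside.
-/

open scoped ComplexConjugate

section Orthogonal

variable {X κ 𝕜 : Type*} [MeasurableSpace X] {μ : Measure X} [RCLike 𝕜]

lemma ofReal_norm_sq_tsum {c : κ → 𝕜} (hc : Summable c) :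
    ((‖∑' k, c k‖ ^ 2 : ℝ) : 𝕜) = ∑' p : κ × κ, c p.1 * conj (c p.2) := by
  have hconj : Summable fun k => ‖conj (c k)‖ := by simpa only [RCLike.norm_conj] using hc.norm
  rw [RCLike.ofReal_pow, ← RCLike.mul_conj, RCLike.conj_tsum,
    tsum_mul_tsum_of_summable_norm hc.norm hconj]

variable [IsFiniteMeasure μ] [Countable κ] {e : κ → X → 𝕜} {C : ℝ} {c : κ → 𝕜}

lemma hasSum_integral_mul_conj (he : ∀ k, AEStronglyMeasurable (e k) μ)
    (hC : ∀ k x, ‖e k x‖ ≤ C) (hc : Summable c) :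
    HasSum (fun p : κ × κ => c p.1 * conj (c p.2) * ∫ x, e p.1 x * conj (e p.2 x) ∂μ)
      ((∫ x, ‖∑' k, c k * e k x‖ ^ 2 ∂μ : ℝ) : 𝕜) := by
  let g (p : κ × κ) (x : X) : 𝕜 := c p.1 * conj (c p.2) * (e p.1 x * conj (e p.2 x))
  have hbound (p : κ × κ) (x : X) : ‖g p x‖ ≤ ‖c p.1‖ * ‖c p.2‖ * (C * C) := by
    have hC0 : 0 ≤ C := (norm_nonneg _).trans (hC p.1 x)
    simp only [g, norm_mul, RCLike.norm_conj]
    gcongr <;> apply hC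
  have hint (p : κ × κ) : Integrable (g p) μ :=
    .of_bound (((he p.1).mul
      (RCLike.continuous_conj.comp_aestronglyMeasurable (he p.2))).const_mul _) _
      (.of_forall (hbound p))
  have hsummable : Summable fun p => ∫ x, ‖g p x‖ ∂μ := by
    have hcc : Summable fun p : κ × κ => ‖c p.1‖ * ‖c p.2‖ :=
      hc.norm.mul_of_nonneg hc.norm (fun _ => norm_nonneg _) (fun _ => norm_nonneg _)
    refine .of_nonneg_of_le (fun p => integral_nonneg fun x => norm_nonneg _) (fun p => ?_)
      ((hcc.mul_right (C * C)).mul_left (μ.real Set.univ))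
    calc ∫ x, ‖g p x‖ ∂μ ≤ ∫ _, ‖c p.1‖ * ‖c p.2‖ * (C * C) ∂μ :=
          integral_mono (hint p).norm (integrable_const _) (hbound p)
      _ = μ.real Set.univ * (‖c p.1‖ * ‖c p.2‖ * (C * C)) := by
          rw [integral_const, smul_eq_mul]
  have hseries (x : X) : ∑' p, g p x = ((‖∑' k, c k * e k x‖ ^ 2 : ℝ) : 𝕜) := by
    have hce : Summable fun k => c k * e k x :=
      .of_norm_bounded (hc.norm.mul_right C) fun k => by rw [norm_mul]; gcongr; exact hC k x
    rw [ofReal_norm_sq_tsum hce]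
    exact tsum_congr fun p => by simp only [g, map_mul]; ring
  simpa only [hseries, g, integral_ofReal, integral_const_mul] using
    hasSum_integral_of_summable_integral_norm hint hsummable

lemma hasSum_mul_norm_sq_of_orthogonal [DecidableEq κ] {V : ℝ}
    (he : ∀ k, AEStronglyMeasurable (e k) μ) (hC : ∀ k x, ‖e k x‖ ≤ C)
    (horth : ∀ k j, ∫ x, e k x * conj (e j x) ∂μ = if k = j then (V : 𝕜) else 0)
    (hc : Summable c) :
    HasSum (fun k => V * ‖c k‖ ^ 2) (∫ x, ‖∑' k, c k * e k x‖ ^ 2 ∂μ) := by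
  have hdouble := hasSum_integral_mul_conj he hC hc
  simp only [horth] at hdouble
  have hdiag : Function.Injective fun k : κ => (k, k) := fun _ _ hkj => congrArg Prod.fst hkj
  have hoff : ∀ p ∉ Set.range fun k : κ => (k, k),
      c p.1 * conj (c p.2) * (if p.1 = p.2 then (V : 𝕜) else 0) = 0 := fun p hp => by
    rw [if_neg fun heq => hp ⟨p.1, Prod.ext rfl heq⟩, mul_zero]
  rw [← RCLike.hasSum_ofReal 𝕜]
  convert! (hdiag.hasSum_iff hoff).mpr hdouble using 2 with k
  simp only [Function.comp_apply, if_true, RCLike.mul_conj, RCLike.ofReal_mul, RCLike.ofReal_pow,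
    mul_comm]

end Orthogonal

section BoxCharacter

variable {ι : Type*} [Fintype ι]

/-- The box `Ω_H = ∏ᵢ [0, hᵢ]` for `H = diag h`, over which the characters are orthogonal. -/
abbrev periodBox (h : ι → ℝ) : Set (ι → ℝ) := Set.pi Set.univ fun i => Set.Icc 0 (h i)

/-- The character `x ↦ e^{2πi(H⁻¹k)·x}` for `H = diag h`, into which the interpolation error is
expanded. The phase `(H⁻¹k)·x` is a real number cast to `ℂ`. -/
noncomputable def boxCharacter (h : ι → ℝ) (k : ι → ℤ) (x : ι → ℝ) : ℂ :=
  Complex.exp (2 * (π : ℂ) * Complex.I * ((∑ i, ((k i : ℝ) / h i) * x i : ℝ) : ℂ))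

lemma norm_boxCharacter (h : ι → ℝ) (k : ι → ℤ) (x : ι → ℝ) : ‖boxCharacter h k x‖ = 1 := by
  simp [boxCharacter, Complex.norm_exp]

lemma boxCharacter_zero (h x : ι → ℝ) : boxCharacter h 0 x = 1 := by
  simp [boxCharacter]

lemma continuous_boxCharacter (h : ι → ℝ) (k : ι → ℤ) : Continuous (boxCharacter h k) := by
  unfold boxCharacter
  fun_prop

lemma boxCharacter_mul_conj (h : ι → ℝ) (k j : ι → ℤ) (x : ι → ℝ) :
    boxCharacter h k x * conj (boxCharacter h j x) = boxCharacter h (k - j) x := by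
  unfold boxCharacter
  rw [← Complex.exp_conj, ← Complex.exp_add]
  congr 1
  simp only [map_mul, Complex.conj_I, Complex.conj_ofReal, map_ofNat, Pi.sub_apply, Int.cast_sub,
    sub_div, sub_mul, Finset.sum_sub_distrib, Complex.ofReal_sub]
  ring

lemma boxCharacter_eq_prod (h : ι → ℝ) (k : ι → ℤ) (x : ι → ℝ) :
    boxCharacter h k x =
      ∏ i, Complex.exp (2 * (π : ℂ) * Complex.I * (((k i : ℝ) / h i * x i : ℝ) : ℂ)) := by
  rw [boxCharacter, ← Complex.exp_sum, ← Finset.mul_sum, Complex.ofReal_sum]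

lemma integral_exp_two_pi_mul_I_mul_int_div (n : ℤ) (a : ℝ) :
    ∫ x in 0..a, Complex.exp (2 * (π : ℂ) * Complex.I * (((n : ℝ) / a * x : ℝ) : ℂ)) =
      if n = 0 then (a : ℂ) else 0 := by
  rcases eq_or_ne a 0 with rfl | ha
  · simp
  split_ifs with hn
  · simp [hn]
  have hfreq : 2 * (π : ℂ) * Complex.I * ((n : ℂ) / a) ≠ 0 :=
    mul_ne_zero Complex.two_pi_I_ne_zero (div_ne_zero (mod_cast hn) (mod_cast ha))
  have hperiod : 2 * (π : ℂ) * Complex.I * ((n : ℂ) / a) * a = n * (2 * π * Complex.I) := by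
    have : (a : ℂ) ≠ 0 := mod_cast ha
    field_simp
  simp only [Complex.ofReal_mul, Complex.ofReal_div, Complex.ofReal_intCast, ← mul_assoc]
  simp only [integral_exp_mul_complex hfreq, hperiod, Complex.exp_int_mul_two_pi_mul_I,
    Complex.ofReal_zero, mul_zero, Complex.exp_zero, sub_self, zero_div]

variable {h : ι → ℝ}

lemma setIntegral_boxCharacter (hh : ∀ i, 0 ≤ h i) (k : ι → ℤ) :
    ∫ x in periodBox h, boxCharacter h k x = if k = 0 then ((∏ i, h i : ℝ) : ℂ) else 0 := by
  simp_rw [boxCharacter_eq_prod]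
  rw [volume_pi, Measure.restrict_pi_pi, integral_fintype_prod_eq_prod (𝕜 := ℂ)
    fun i (y : ℝ) => Complex.exp (2 * (π : ℂ) * Complex.I * (((k i : ℝ) / h i * y : ℝ) : ℂ))]
  simp_rw [integral_Icc_eq_integral_Ioc, ← intervalIntegral.integral_of_le (hh _),
    integral_exp_two_pi_mul_I_mul_int_div]
  split_ifs with hk
  · simp [hk]
  · obtain ⟨i, hi⟩ := Function.ne_iff.mp hk
    exact Finset.prod_eq_zero (Finset.mem_univ i) (if_neg hi)

lemma setIntegral_boxCharacter_mul_conj (hh : ∀ i, 0 ≤ h i) (k j : ι → ℤ) :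
    ∫ x in periodBox h, boxCharacter h k x * conj (boxCharacter h j x) =
      if k = j then ((∏ i, h i : ℝ) : ℂ) else 0 := by
  simp_rw [boxCharacter_mul_conj, setIntegral_boxCharacter hh, sub_eq_zero]

lemma hasSum_setIntegral_norm_sq_tsum_boxCharacter (hh : ∀ i, 0 ≤ h i) {c : (ι → ℤ) → ℂ}
    (hc : Summable c) :
    HasSum (fun k => (∏ i, h i) * ‖c k‖ ^ 2)
      (∫ x in periodBox h, ‖∑' k, c k * boxCharacter h k x‖ ^ 2) := by
  have : IsFiniteMeasure (volume.restrict (periodBox h)) :=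
    isFiniteMeasure_restrict.mpr (isCompact_univ_pi fun i => isCompact_Icc).measure_ne_top
  exact hasSum_mul_norm_sq_of_orthogonal
    (fun k => (continuous_boxCharacter h k).aestronglyMeasurable)
    (fun k x => (norm_boxCharacter h k x).le) (setIntegral_boxCharacter_mul_conj hh) hc

lemma summable_mul_boxCharacter {a : (ι → ℤ) → ℂ} (ha : Summable a) (x : ι → ℝ) :
    Summable fun k => a k * boxCharacter h k x :=
  .of_norm <| by simpa only [norm_mul, norm_boxCharacter, mul_one] using ha.norm

lemma one_sub_tsum_mul_boxCharacter {a : (ι → ℤ) → ℂ} (ha : Summable a) (x : ι → ℝ) :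
    1 - ∑' k, a k * boxCharacter h k x =
      ∑' k, ((if k = 0 then 1 else 0) - a k) * boxCharacter h k x := by
  have hone : HasSum (fun k : ι → ℤ => (if k = 0 then 1 else 0) * boxCharacter h k x) 1 := by
    simpa [boxCharacter_zero] using
      hasSum_single (f := fun k : ι → ℤ => (if k = 0 then 1 else 0) * boxCharacter h k x) 0
        fun k hk => by simp [hk]
  simp_rw [sub_mul]
  exact (hone.sub (summable_mul_boxCharacter ha x).hasSum).tsum_eq.symm

lemma setIntegral_norm_sq_one_sub_tsum_boxCharacter (hh : ∀ i, 0 ≤ h i) {a : (ι → ℤ) → ℂ}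
    (ha : Summable a) :
    ∫ x in periodBox h, ‖1 - ∑' k, a k * boxCharacter h k x‖ ^ 2 =
      (∏ i, h i) * (‖1 - a 0‖ ^ 2 + ∑' k : {k : ι → ℤ // k ≠ 0}, ‖a k‖ ^ 2) := by
  let c (k : ι → ℤ) : ℂ := (if k = 0 then 1 else 0) - a k
  have hc : Summable c := (hasSum_ite_eq 0 1).summable.sub ha
  have hparseval := hasSum_setIntegral_norm_sq_tsum_boxCharacter hh hc
  have hoff (k : {k : ι → ℤ // k ≠ 0}) : ‖c k‖ = ‖a k‖ := by simp [c, k.2]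
  simp_rw [one_sub_tsum_mul_boxCharacter ha]
  rw [← hparseval.tsum_eq, ← hparseval.summable.tsum_subtype_add_tsum_subtype_compl {0},
    tsum_singleton 0 fun k => (∏ i, h i) * ‖c k‖ ^ 2, tsum_mul_left, ← mul_add]
  congr 2
  · simp [c]
  · exact tsum_congr fun k => congrArg (· ^ 2) (hoff k)

end BoxCharacter

theorem parseval_interpolation_identity_general {ι : Type*} [Fintype ι] (μ : Measure (ι → ℝ))
    [SFinite μ] {h : ι → ℝ} (hh : ∀ i, 0 < h i) (F : (ι → ℝ) → ℝ) (K : (ι → ℝ) → ℂ)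
    (hK : ∀ᵐ ω ∂μ, Summable fun k : ι → ℤ => K (ω + fun i => (k i : ℝ) / h i))
    (hint : Integrable
      (fun p : (ι → ℝ) × (ι → ℝ) =>
        F p.1 * ‖1 - ∑' k, K (p.1 + fun i => (k i : ℝ) / h i) * boxCharacter h k p.2‖ ^ 2)
      (μ.prod (volume.restrict (periodBox h)))) :
    (∏ i, h i)⁻¹ *
        ∫ x in periodBox h, ∫ ω,
          F ω * ‖1 - ∑' k, K (ω + fun i => (k i : ℝ) / h i) * boxCharacter h k x‖ ^ 2 ∂μ
      = ∫ ω, F ω * (‖1 - K ω‖ ^ 2 +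
          ∑' k : {k : ι → ℤ // k ≠ 0}, ‖K (ω + fun i => (k.1 i : ℝ) / h i)‖ ^ 2) ∂μ := by
  have hvol : ∏ i, h i ≠ 0 := Finset.prod_ne_zero_iff.mpr fun i _ => (hh i).ne'
  rw [← integral_integral_swap hint, ← integral_const_mul]
  refine integral_congr_ae (hK.mono fun ω hω => ?_)
  have hzero : (ω + fun i => (((0 : ι → ℤ) i : ℤ) : ℝ) / h i) = ω := by ext i; simp
  have hinner := setIntegral_norm_sq_one_sub_tsum_boxCharacter (fun i => (hh i).le) hω
  rw [hzero] at hinner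
  simp only [integral_const_mul, hinner]
  field_simp

/-- The Parseval-type identity underlying Theorem 1: with `Ω_H = [0,h₁]×…×[0,h_d]`
and `H⁻¹k = (k₁/h₁, …, k_d/h_d)`,
`(1/(h₁⋯h_d)) ∫_{Ω_H} ∫_{ℝ^d} F(ω) |1 − ∑_{k∈ℤ^d} K̂(ω + H⁻¹k) e^{2πi(H⁻¹k)·x}|² dω dx
  = ∫_{ℝ^d} F(ω) [(1 − K̂(ω))² + ∑_{k ≠ 0} K̂(ω + H⁻¹k)²] dω`,
using the orthogonality of the characters `x ↦ e^{2πi(H⁻¹k)·x}` on `Ω_H`. -/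
theorem parseval_interpolation_identity (d : ℕ) (hd : 1 ≤ d) (h : Fin d → ℝ)
    (hh : ∀ i, 0 < h i) (F K : (Fin d → ℝ) → ℝ)
    (hFm : Measurable F) (hFi : Integrable F) (hF0 : ∀ ω, 0 ≤ F ω)
    (hKm : Measurable K)
    (habs : ∀ᵐ ω : Fin d → ℝ, Summable fun k : Fin d → ℤ =>
      |K (ω + fun i => (k i : ℝ) / h i)|)
    (hint : IntegrableOn
      (fun p : (Fin d → ℝ) × (Fin d → ℝ) =>
        F p.1 * ‖(1 : ℂ) - ∑' k : Fin d → ℤ,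
          ((K (p.1 + fun i => (k i : ℝ) / h i) : ℝ) : ℂ) *
            Complex.exp (2 * (π : ℂ) * Complex.I *
              ((∑ i, ((k i : ℝ) / h i) * p.2 i : ℝ) : ℂ))‖ ^ 2)
      (Set.univ ×ˢ Set.pi Set.univ fun i => Set.Icc 0 (h i))) :
    (1 / ∏ i, h i) *
        ∫ x in Set.pi Set.univ (fun i => Set.Icc 0 (h i)),
          ∫ ω : Fin d → ℝ,
            F ω * ‖(1 : ℂ) - ∑' k : Fin d → ℤ,
              ((K (ω + fun i => (k i : ℝ) / h i) : ℝ) : ℂ) *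
                Complex.exp (2 * (π : ℂ) * Complex.I *
                  ((∑ i, ((k i : ℝ) / h i) * x i : ℝ) : ℂ))‖ ^ 2
      = ∫ ω : Fin d → ℝ,
          F ω * ((1 - K ω) ^ 2 +
            ∑' k : {k : Fin d → ℤ // k ≠ 0},
              (K (ω + fun i => (k.1 i : ℝ) / h i)) ^ 2) := by
  have hnorm (r : ℝ) : ‖(1 : ℂ) - r‖ ^ 2 = (1 - r) ^ 2 := by
    rw [← Complex.ofReal_one, ← Complex.ofReal_sub, Complex.norm_real, norm_eq_abs, sq_abs]
  rw [IntegrableOn, Measure.volume_eq_prod, ← Measure.prod_restrict, Measure.restrict_univ] at hint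
  simpa only [hnorm, Complex.norm_real, norm_eq_abs, sq_abs, one_div] using!
    parseval_interpolation_identity_general (volume : Measure (Fin d → ℝ)) hh F (fun ω => (K ω : ℂ))
      (habs.mono fun ω hω => Complex.summable_ofReal.mpr hω.of_abs) hint
end

section
/- Let d ≥ 1 be an integer and let L_f, L_g, c, ρ, Λ > 0. Let a* = (c ρ² L_f / L_g)^{d/(d+2)}, let R_2 = ρ² (L_f/2) ((c + a*)/(π Λ a*))^{2/d} + (L_g/2) ((c + a*)/(π Λ))^{2/d}, and let R_1 = (ρ² L_f/2 + L_g/2) (c/(π Λ))^{2/d}. Then R_2 / R_1 = (1 + (L_f^d ρ^{2d} / (L_g^d c²))^{1/(d+2)})^{(d+2)/d} / (1 + ρ² L_f / L_g). -/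
open Real

/-
The error of the variable fidelity scenario at sample-size ratio `a` is proportional to
`(c + a) ^ p * (A / a ^ p + B)`, where `p = 2 / d`, `A = ρ ^ 2 * L_f / 2` and `B = L_g / 2`.
Its critical point is given by `a ^ (1 + p) = c * A / B`, and there the second factor collapses to
`B * (1 + a / c)`, so that the whole error becomes a single power of `1 + a / c`.
-/

/-- The minimax interpolation error in the variable fidelity scenario when `a` low fidelity points
are used per high fidelity point. Here `p` is `2 / d`, `c` is the relative cost of a high fidelity
evaluation, `N` is `π` times the budget, and `A` and `B` are the coefficients `ρ ^ 2 * L_f / 2` and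
`L_g / 2` of the low fidelity and the discrepancy terms. -/
noncomputable def variableFidelityError (p c N A B a : ℝ) : ℝ :=
  A * ((c + a) / (N * a)) ^ p + B * ((c + a) / N) ^ p

section

variable {p c N A B a : ℝ}

theorem variableFidelityError_eq_mul (hc : 0 < c) (hN : 0 < N) (ha : 0 < a) :
    variableFidelityError p c N A B a = (c / N) ^ p * (1 + a / c) ^ p * (A / a ^ p + B) := by
  have hsplit : (c + a) / N = c / N * (1 + a / c) := by field_simp
  have hpow : ((c + a) / N) ^ p = (c / N) ^ p * (1 + a / c) ^ p := by
    rw [hsplit, mul_rpow (by positivity) (by positivity)]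
  rw [variableFidelityError, ← div_div, div_rpow (by positivity) ha.le, hpow]
  ring

theorem variableFidelityError_of_rpow_eq (hc : 0 < c) (hN : 0 < N) (ha : 0 < a) (hB : B ≠ 0)
    (hcrit : a ^ (1 + p) = c * A / B) :
    variableFidelityError p c N A B a = B * (c / N) ^ p * (1 + a / c) ^ (1 + p) := by
  have hap : a ^ p ≠ 0 := (rpow_pos_of_pos ha p).ne'
  have hA : A / a ^ p = B * (a / c) := by
    rw [rpow_add ha, rpow_one] at hcrit
    field_simp at hcrit ⊢
    linarith
  have hpos : 0 < 1 + a / c := by positivity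
  rw [variableFidelityError_eq_mul hc hN ha, hA, rpow_add hpos, rpow_one]
  ring

theorem variableFidelityError_div_of_rpow_eq (hc : 0 < c) (hN : 0 < N) (ha : 0 < a) (hB : B ≠ 0)
    (hcrit : a ^ (1 + p) = c * A / B) :
    variableFidelityError p c N A B a / ((A + B) * (c / N) ^ p)
      = (1 + a / c) ^ (1 + p) / (1 + A / B) := by
  have hu : (c / N) ^ p ≠ 0 := (rpow_pos_of_pos (div_pos hc hN) p).ne'
  have hsum : A + B = B * (1 + A / B) := by field_simp; ring
  rw [variableFidelityError_of_rpow_eq hc hN ha hB hcrit, hsum, mul_right_comm B (1 + A / B),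
    mul_div_mul_left _ _ (mul_ne_zero hB hu)]

end

section

variable {d c x : ℝ}

theorem rpow_div_add_two_rpow_one_add_two_div (hx : 0 ≤ x) (hd : d ≠ 0) (hd2 : d + 2 ≠ 0) :
    (x ^ (d / (d + 2))) ^ (1 + 2 / d) = x := by
  have hexp : d / (d + 2) * (1 + 2 / d) = 1 := by field_simp
  rw [← rpow_mul hx, hexp, rpow_one]

theorem mul_rpow_div_add_two_div (hc : 0 < c) (hx : 0 ≤ x) (hd2 : d + 2 ≠ 0) :
    (c * x) ^ (d / (d + 2)) / c = (x ^ d / c ^ 2) ^ (1 / (d + 2)) := by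
  have hcx : 0 ≤ c * x := by positivity
  have hroot : (c ^ (d + 2)) ^ (1 / (d + 2)) = c := by
    rw [← rpow_mul hc.le, mul_one_div_cancel hd2, rpow_one]
  have hbase : (c * x) ^ d / c ^ (d + 2) = x ^ d / c ^ 2 := by
    rw [mul_rpow hc.le hx, rpow_add hc, rpow_two, mul_div_mul_left _ _ (by positivity)]
  calc (c * x) ^ (d / (d + 2)) / c
      = ((c * x) ^ d) ^ (1 / (d + 2)) / (c ^ (d + 2)) ^ (1 / (d + 2)) := by
        rw [hroot, ← rpow_mul hcx, mul_one_div]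
    _ = (x ^ d / c ^ 2) ^ (1 / (d + 2)) := by
        rw [← div_rpow (by positivity) (by positivity), hbase]

end

-- The power `ρ ^ (2 * d)` appears as `(ρ ^ 2) ^ d` because `ρ` may be negative here.
theorem error_ratio_formula_general {d Lf Lg c ρ Λ : ℝ} (hd : d ≠ 0) (hd2 : d + 2 ≠ 0)
    (hLf : 0 < Lf) (hLg : 0 < Lg) (hc : 0 < c) (hρ : ρ ≠ 0) (hΛ : 0 < Λ) {astar R1 R2 : ℝ}
    (hastar : astar = (c * ρ ^ 2 * Lf / Lg) ^ (d / (d + 2)))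
    (hR2 : R2 = ρ ^ 2 * (Lf / 2) * ((c + astar) / (π * Λ * astar)) ^ (2 / d) +
        (Lg / 2) * ((c + astar) / (π * Λ)) ^ (2 / d))
    (hR1 : R1 = (ρ ^ 2 * Lf / 2 + Lg / 2) * (c / (π * Λ)) ^ (2 / d)) :
    R2 / R1
      = (1 + (Lf ^ d * (ρ ^ 2) ^ d / (Lg ^ d * c ^ 2)) ^ (1 / (d + 2))) ^ ((d + 2) / d)
          / (1 + ρ ^ 2 * Lf / Lg) := by
  have hκ : 0 < ρ ^ 2 * Lf / Lg := by positivity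
  have hastar' : astar = (c * (ρ ^ 2 * Lf / Lg)) ^ (d / (d + 2)) := by
    rw [hastar, mul_assoc, mul_div_assoc]
  have hcoef : ρ ^ 2 * (Lf / 2) / (Lg / 2) = ρ ^ 2 * Lf / Lg := by field_simp
  have hcrit : astar ^ (1 + 2 / d) = c * (ρ ^ 2 * (Lf / 2)) / (Lg / 2) := by
    rw [hastar', rpow_div_add_two_rpow_one_add_two_div (by positivity) hd hd2, ← hcoef,
      mul_div_assoc c]
  have hratio : astar / c = (Lf ^ d * (ρ ^ 2) ^ d / (Lg ^ d * c ^ 2)) ^ (1 / (d + 2)) := by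
    rw [hastar', mul_rpow_div_add_two_div hc hκ.le hd2, div_rpow (by positivity) hLg.le,
      mul_comm (ρ ^ 2) Lf, mul_rpow hLf.le (sq_nonneg ρ), div_div]
  have hexp : (d + 2) / d = 1 + 2 / d := by rw [add_div, div_self hd]
  have hpos : 0 < astar := by rw [hastar']; positivity
  rw [← variableFidelityError] at hR2
  rw [hR2, hR1, mul_div_assoc (ρ ^ 2) Lf 2,
    variableFidelityError_div_of_rpow_eq hc (by positivity) hpos (by positivity) hcrit,
    hcoef, hratio, hexp]

/-- The ratio of the minimax interpolation errors of the variable fidelity and the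
single (high) fidelity scenarios under the same budget `Λ`:
`R₂/R₁ = (1 + (L_f^d ρ^{2d} / (L_g^d c²))^{1/(d+2)})^{(d+2)/d} / (1 + ρ²L_f/L_g)`,
where `a* = (cρ²L_f/L_g)^{d/(d+2)}` is the optimal sample-size ratio. -/
theorem error_ratio_formula (d : ℕ) (hd : 1 ≤ d) (Lf Lg c ρ Λ : ℝ)
    (hLf : 0 < Lf) (hLg : 0 < Lg) (hc : 0 < c) (hρ : 0 < ρ) (hΛ : 0 < Λ)
    (astar R1 R2 : ℝ)
    (hastar : astar = (c * ρ ^ 2 * Lf / Lg) ^ ((d : ℝ) / (d + 2)))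
    (hR2 : R2 = ρ ^ 2 * (Lf / 2) * ((c + astar) / (π * Λ * astar)) ^ ((2 : ℝ) / d) +
        (Lg / 2) * ((c + astar) / (π * Λ)) ^ ((2 : ℝ) / d))
    (hR1 : R1 = (ρ ^ 2 * Lf / 2 + Lg / 2) * (c / (π * Λ)) ^ ((2 : ℝ) / d)) :
    R2 / R1
      = (1 + (Lf ^ d * ρ ^ (2 * d) / (Lg ^ d * c ^ 2)) ^ (1 / ((d : ℝ) + 2)))
          ^ (((d : ℝ) + 2) / d) / (1 + ρ ^ 2 * Lf / Lg) := by
  simpa only [rpow_natCast, ← pow_mul] using error_ratio_formula_general (d := d)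
    (by positivity) (by positivity) hLf hLg hc hρ.ne' hΛ hastar hR2 hR1
end
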